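/- There do not exist rational numbers a, b, c with a + b + c = 1 and a·b·c = 1. -/

import Mathlib

abbrev Eis := QuadraticAlgebra ℤ (-1) (-1)

namespace Eis

lemma norm_eq (z : Eis) : z.norm = z.re ^ 2 - z.re * z.im + z.im ^ 2 := by
  rw [QuadraticAlgebra.norm_def]; ring

lemma norm_nonneg (z : Eis) : 0 ≤ z.norm := by
  rw [norm_eq]; nlinarith [sq_nonneg (z.re - z.im), sq_nonneg z.re, sq_nonneg z.im]

lemma norm_pos {z : Eis} (hz : z ≠ 0) : 0 < z.norm := by
  rcases (norm_nonneg z).lt_or_eq with h | h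
  · exact h
  · exfalso
    apply hz
    rw [norm_eq] at h
    have h1 : z.re ^ 2 = 0 := by
      nlinarith [sq_nonneg (z.re - z.im), sq_nonneg z.re, sq_nonneg z.im]
    have h2 : z.im ^ 2 = 0 := by
      nlinarith [sq_nonneg (z.re - z.im), sq_nonneg z.re, sq_nonneg z.im]
    ext
    · simpa using h1
    · simpa using h2

lemma round_exists (u N : ℤ) (hN : 0 < N) : ∃ q, 2 * |u - N * q| ≤ N := by
  refine ⟨(2 * u + N) / (2 * N), ?_⟩
  have h1 := Int.mul_ediv_add_emod (2 * u + N) (2 * N)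
  have h2 := Int.emod_nonneg (2 * u + N) (show 2 * N ≠ 0 by omega)
  have h3 := Int.emod_lt_of_pos (2 * u + N) (show 0 < 2 * N by omega)
  generalize (2 * u + N) / (2 * N) = q at *
  have : |u - N * q| * 2 = |2 * (u - N * q)| := by rw [abs_mul]; simp [mul_comm]
  rw [mul_comm, this, abs_le]
  constructor <;> nlinarith

lemma div_exists (a b : Eis) (hb : b ≠ 0) : ∃ q : Eis, (a - b * q).norm < b.norm := by
  have hN := norm_pos hb
  obtain ⟨q1, h1⟩ := round_exists (a * star b).re b.norm hN
  obtain ⟨q2, h2⟩ := round_exists (a * star b).im b.norm hN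
  refine ⟨⟨q1, q2⟩, ?_⟩
  have key : (a - b * ⟨q1, q2⟩).norm * b.norm =
      ((a * star b).re - b.norm * q1) ^ 2
      - ((a * star b).re - b.norm * q1) * ((a * star b).im - b.norm * q2)
      + ((a * star b).im - b.norm * q2) ^ 2 := by
    simp only [norm_eq, QuadraticAlgebra.re_mul, QuadraticAlgebra.im_mul, QuadraticAlgebra.re_sub,
      QuadraticAlgebra.im_sub, QuadraticAlgebra.re_star, QuadraticAlgebra.im_star]
    ring
  generalize (a * star b).re - b.norm * q1 = e at *
  generalize (a * star b).im - b.norm * q2 = f at *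
  generalize b.norm = N at *
  generalize (a - b * ⟨q1, q2⟩).norm = M at *
  have e1 : e ^ 2 = |e| ^ 2 := (sq_abs e).symm
  have f1 : f ^ 2 = |f| ^ 2 := (sq_abs f).symm
  have ef : -(e * f) ≤ |e| * |f| := by rw [← abs_mul]; exact neg_le_abs _
  have h5 : M * N < N * N := by
    have := abs_nonneg e
    have := abs_nonneg f
    nlinarith
  exact lt_of_mul_lt_mul_right h5 hN.le

open Classical in
/-- The Euclidean structure on the Eisenstein integers. -/
@[reducible] noncomputable def euclid : EuclideanDomain Eis :=
  { (inferInstance : CommRing Eis), (inferInstance : Nontrivial Eis) with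
    quotient := fun a b => if hb : b = 0 then 0 else (div_exists a b hb).choose
    quotient_zero := by simp
    remainder := fun a b => a - b * (if hb : b = 0 then 0 else (div_exists a b hb).choose)
    quotient_mul_add_remainder_eq := by intros; ring
    r := fun a b => a.norm.natAbs < b.norm.natAbs
    r_wellFounded := (measure (fun a : Eis => a.norm.natAbs)).wf
    remainder_lt := by
      intro a b hb
      simp only [hb, dif_neg, not_false_eq_true]
      have := (div_exists a b hb).choose_spec
      have h0 := norm_nonneg (a - b * (div_exists a b hb).choose)
      have h1 := norm_nonneg b
      omega
    mul_left_not_lt := by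
      intro a b hb h
      rw [map_mul, Int.natAbs_mul] at h
      have := norm_pos hb
      have : 1 ≤ b.norm.natAbs := by omega
      have h5 : a.norm.natAbs * 1 ≤ a.norm.natAbs * b.norm.natAbs := Nat.mul_le_mul_left _ this
      omega }

instance : IsDomain Eis := @EuclideanDomain.instIsDomain Eis euclid

instance : IsPrincipalIdealRing Eis := @EuclideanDomain.to_principal_ideal_domain Eis euclid

lemma re_one' : (1 : Eis).re = 1 := rfl

lemma im_one' : (1 : Eis).im = 0 := rfl

lemma unit_cases (u : Eis) (hu : IsUnit u) : ∃ v : Eis, (v = 1 ∨ v = ⟨0, 1⟩ ∨ v = ⟨-1, -1⟩) ∧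
    (u = v ∨ u = -v) := by
  have h := (QuadraticAlgebra.isUnit_iff_norm_isUnit).1 hu
  have h0 := norm_nonneg u
  rw [Int.isUnit_iff] at h
  have h1 : u.norm = 1 := by omega
  rw [norm_eq] at h1
  obtain ⟨x, y⟩ := u
  simp only at h1
  have hx : x ^ 2 ≤ 1 := by nlinarith [sq_nonneg (x - 2 * y)]
  have hy : y ^ 2 ≤ 1 := by nlinarith [sq_nonneg (2 * x - y)]
  have hx1 : x ≤ 1 := by nlinarith
  have hx2 : -1 ≤ x := by nlinarith
  have hy1 : y ≤ 1 := by nlinarith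
  have hy2 : -1 ≤ y := by nlinarith
  have h11 : (1 : Eis) = ⟨1, 0⟩ := rfl
  rw [h11]
  interval_cases x <;> interval_cases y <;> first
    | (exfalso; omega)
    | (refine ⟨⟨1, 0⟩, Or.inl rfl, ?_⟩; simp; done)
    | (refine ⟨⟨0, 1⟩, Or.inr (Or.inl rfl), ?_⟩; simp; done)
    | (refine ⟨⟨-1, -1⟩, Or.inr (Or.inr rfl), ?_⟩; simp; done)

end Eis

/-- Coprime cubes of Eisenstein norms. -/
lemma cube_lemma (X Y n : ℤ) (hXY : IsCoprime X Y) (h3 : 3 ∣ Y)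
    (h : X ^ 2 - X * Y + Y ^ 2 = n ^ 3) :
    ∃ x y : ℤ, X = x ^ 3 - 3 * x * y ^ 2 + y ^ 3 ∧ Y = 3 * x * y * (x - y) ∧
      n = x ^ 2 - x * y + y ^ 2 := by
  have hX3 : ¬ (3 : ℤ) ∣ X := by
    intro hd
    have := hXY.isUnit_of_dvd' hd h3
    rw [Int.isUnit_iff] at this
    omega
  let g : Eis := ⟨X, Y⟩
  let g' : Eis := ⟨X - Y, -Y⟩
  have hmul : g * g' = (n : Eis) ^ 3 := by
    rw [← Int.cast_pow, ← h]
    ext <;> simp only [QuadraticAlgebra.re_intCast, QuadraticAlgebra.im_intCast] <;> simp [g, g'] <;> ring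
  have hn3 : IsCoprime (X ^ 2 - X * Y + Y ^ 2) 3 := by
    apply IsCoprime.symm
    refine (Int.prime_three.irreducible.coprime_iff_not_dvd).2 ?_
    intro hd
    apply hX3
    apply Int.prime_three.dvd_of_dvd_pow (n := 2)
    have : X ^ 2 = (X ^ 2 - X * Y + Y ^ 2) + Y * (X - Y) := by ring
    rw [this]
    exact dvd_add hd (h3.mul_right _)
  have hcop : IsCoprime g g' := by
    obtain ⟨a, b, hab⟩ := hXY
    obtain ⟨c, d, hcd⟩ := hn3
    refine ⟨(c : Eis) * g' + (d : Eis) * ((a : Eis) * ⟨1, -1⟩ + (b : Eis) * ⟨-1,-2⟩),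
      (d : Eis) * ((a : Eis) * ⟨2, 1⟩ + (b : Eis) * ⟨1,2⟩), ?_⟩
    ext
    · rw [Eis.re_one']
      simp [g, g']
      linear_combination hcd + 3 * d * hab
    · rw [Eis.im_one']
      simp [g, g']
      ring
  obtain ⟨β, hβ⟩ := exists_associated_pow_of_mul_eq_pow' hcop hmul
  obtain ⟨u, hu⟩ := hβ
  obtain ⟨v, hv, huv⟩ := Eis.unit_cases u u.isUnit
  obtain ⟨β, hβ⟩ : ∃ β : Eis, β ^ 3 * v = g := by
    rcases huv with e | e
    · exact ⟨β, by rw [← e, hu]⟩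
    · exact ⟨-β, by rw [← hu, e]; ring⟩
  obtain ⟨x, y⟩ := β
  have hc : (⟨x, y⟩ : Eis) ^ 3 = ⟨x ^ 3 - 3 * x * y ^ 2 + y ^ 3, 3 * (x * y * (x - y))⟩ := by
    ext <;> simp [pow_succ] <;> ring
  rw [hc] at hβ
  rcases hv with rfl | rfl | rfl
  · rw [mul_one] at hβ
    have e1 := congrArg QuadraticAlgebra.re hβ
    have e2 := congrArg QuadraticAlgebra.im hβ
    simp only [g] at e1 e2
    refine ⟨x, y, e1.symm, by rw [← e2]; ring, ?_⟩
    have : n ^ 3 = (x ^ 2 - x * y + y ^ 2) ^ 3 := by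
      rw [← h, ← e1, ← e2]; ring
    exact (Odd.strictMono_pow (by decide)).injective this
  · exfalso
    have e1 := congrArg QuadraticAlgebra.re hβ
    simp [g] at e1
    apply hX3
    omega
  · exfalso
    have e1 := congrArg QuadraticAlgebra.re hβ
    have e2 := congrArg QuadraticAlgebra.im hβ
    simp [g] at e1 e2
    apply hX3
    omega

/-- The set of denominators we descend on. -/
def Good (d : ℤ) : Prop := ∃ X Y Z : ℤ, X + Y + Z = d ∧ X * Y * Z = d ^ 3

lemma parity (r s t : ℤ) (h : r ^ 3 + s ^ 3 + t ^ 3 = r * s * t)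
    (hrs : IsCoprime r s) (hrt : IsCoprime r t) (hst : IsCoprime s t) : (2 : ℤ) ∣ 3 * r + 3 * s + t := by
  have key : ∀ r s t : ZMod 4, r ^ 3 + s ^ 3 + t ^ 3 = r * s * t →
      2 * (r + s + t) = 0 ∨ (2 * r = 0 ∧ 2 * s = 0) ∨ (2 * r = 0 ∧ 2 * t = 0) ∨
        (2 * s = 0 ∧ 2 * t = 0) := by decide
  have hz : ∀ a : ℤ, 2 * (a : ZMod 4) = 0 → (2 : ℤ) ∣ a := by
    intro a ha
    have : ((2 * a : ℤ) : ZMod 4) = 0 := by push_cast; exact ha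
    rw [ZMod.intCast_zmod_eq_zero_iff_dvd] at this
    push_cast at this
    omega
  have no2 : ∀ a b : ℤ, IsCoprime a b → (2 : ℤ) ∣ a → (2 : ℤ) ∣ b → False := by
    intro a b hab h1 h2
    have := hab.isUnit_of_dvd' h1 h2
    rw [Int.isUnit_iff] at this
    omega
  have h4 := congrArg (Int.cast : ℤ → ZMod 4) h
  push_cast at h4
  rcases key _ _ _ h4 with h1 | ⟨h1, h2⟩ | ⟨h1, h2⟩ | ⟨h1, h2⟩
  · have := hz (r + s + t) (by push_cast; exact h1)
    omega
  · exact (no2 _ _ hrs (hz _ h1) (hz _ h2)).elim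
  · exact (no2 _ _ hrt (hz _ h1) (hz _ h2)).elim
  · exact (no2 _ _ hst (hz _ h1) (hz _ h2)).elim

lemma size (r s t l : ℤ) (h0 : r * s * t ≠ 0) (hl : l ≠ 0) (c : ℤ) (hc : 26 ≤ c)
    (h : 3 * r + 3 * s + t = c * l ^ 3) : 3 * |l| < |r * s * t| := by
  have hr : r ≠ 0 := by rintro rfl; simp at h0
  have hs : s ≠ 0 := by rintro rfl; simp at h0
  have ht : t ≠ 0 := by rintro rfl; simp at h0
  have h1 := Int.le_of_dvd (abs_pos.2 h0) ((abs_dvd_abs r (r * s * t)).2 ⟨s * t, by ring⟩)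
  have h2 := Int.le_of_dvd (abs_pos.2 h0) ((abs_dvd_abs s (r * s * t)).2 ⟨r * t, by ring⟩)
  have h3 := Int.le_of_dvd (abs_pos.2 h0) ((abs_dvd_abs t (r * s * t)).2 ⟨r * s, by ring⟩)
  have h4 : |3 * r + 3 * s + t| ≤ 3 * |r| + 3 * |s| + |t| := by
    rw [abs_le]
    constructor <;> nlinarith [le_abs_self r, le_abs_self s, le_abs_self t, neg_abs_le r,
      neg_abs_le s, neg_abs_le t]
  rw [h, abs_mul, abs_pow, abs_of_nonneg (by omega : 0 ≤ c)] at h4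
  have h5 : 1 ≤ |l| := Int.one_le_abs hl
  have h6 : |l| ≤ |l| ^ 3 := le_self_pow₀ h5 (by norm_num)
  have h7 : 26 * |l| ^ 3 ≤ c * |l| ^ 3 := by
    apply mul_le_mul_of_nonneg_right hc; positivity
  omega

lemma prime_dvd_three {p : ℤ} (hp : Prime p) (h : p ∣ 3) : (3 : ℤ) ∣ p :=
  ((hp.irreducible.associated_of_dvd Int.prime_three.irreducible h)).symm.dvd

lemma coprime_false {a b p : ℤ} (h : IsCoprime a b) (hp : Prime p) (ha : p ∣ a) (hb : p ∣ b) :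
    False := hp.not_isUnit (h.isUnit_of_dvd' ha hb)

lemma cube_inj {a b : ℤ} (h : a ^ 3 = b ^ 3) : a = b :=
  (Odd.strictMono_pow (by decide : Odd 3)).injective h

/-- Case where `3` does not divide `t`. -/
lemma stepA (r s t m : ℤ) (h : r ^ 3 + s ^ 3 + t ^ 3 = r * s * t) (h0 : r * s * t ≠ 0)
    (hrt : IsCoprime r t) (hst : IsCoprime s t) (hm : 3 * r + 3 * s + t = 26 * m)
    (h3 : ¬ (3 : ℤ) ∣ t) : ∃ d, d ≠ 0 ∧ |d| < |r * s * t| ∧ Good d := by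
  obtain ⟨N, hN⟩ : ∃ N, N = 9*r^2 + 9*s^2 + t^2 - 9*r*s - 3*r*t - 3*s*t := ⟨_, rfl⟩
  have ht : t ≠ 0 := by rintro rfl; simp at h0
  have hmN : m * N = (-t) ^ 3 := by
    have : 26 * (m * N) = 26 * (-t) ^ 3 := by
      rw [← mul_assoc, ← hm, hN]; linear_combination 27 * h
    linarith
  have hNt : ∀ p : ℤ, Prime p → p ∣ N → p ∣ t := by
    intro p hp hpN
    have : p ∣ (-t) ^ 3 := by rw [← hmN]; exact hpN.mul_left _
    exact (dvd_neg).1 (hp.dvd_of_dvd_pow this)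
  have h3r : ∀ p : ℤ, Prime p → p ∣ t → ¬ p ∣ 3 := by
    intro p hp hpt hp3
    exact h3 ((prime_dvd_three hp hp3).trans hpt)
  have hN0 : N ≠ 0 := by
    rintro e
    rw [e, mul_zero] at hmN
    exact ht (by simpa using hmN.symm)
  have hcop : IsCoprime m N := by
    refine isCoprime_of_prime_dvd (by simp [hN0]) ?_
    intro p hp hpm hpN
    have hpt := hNt p hp hpN
    have h27 : p ∣ 3 * (3 * (3 * (r * s))) := by
      have e : 3 * (3 * (3 * (r * s))) = m * (26 * (26 * m - 3 * t)) + t * (3 * t) - N := by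
        rw [hN]; linear_combination (3*r+3*s+t+26*m - 3*t)*hm
      rw [e]
      exact dvd_sub (dvd_add (hpm.mul_right _) (hpt.mul_right _)) hpN
    have n3 := h3r p hp hpt
    have hrs := (hp.dvd_or_dvd ((hp.dvd_or_dvd ((hp.dvd_or_dvd ((hp.dvd_or_dvd h27).resolve_left
      n3)).resolve_left n3)).resolve_left n3))
    rcases hrs with hh | hh
    · exact coprime_false hrt hp hh hpt
    · exact coprime_false hst hp hh hpt
  obtain ⟨⟨l, hl⟩, ⟨n, hn⟩⟩ := Int.eq_pow_of_mul_eq_pow_odd hcop (by decide) hmN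
  have hln : l * n = -t := cube_inj (by rw [mul_pow, ← hl, ← hn, hmN])
  have hl0 : l ≠ 0 := by rintro rfl; apply ht; linarith
  have hcop2 : IsCoprime (t - 3 * r) (3 * s - 3 * r) := by
    refine isCoprime_of_prime_dvd ?_ ?_
    · rintro ⟨e1, e2⟩
      exact h3 ⟨r, by linarith⟩
    · intro p hp h1 h2
      have hpN : p ∣ N := by
        have e : N = (t - 3 * r) * (t - 3 * r) - (t - 3 * r) * (3 * s - 3 * r)
          + (3 * s - 3 * r) * (3 * s - 3 * r) := by rw [hN]; ring
        rw [e]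
        exact dvd_add (dvd_sub (h1.mul_right _) (h1.mul_right _)) (h2.mul_right _)
      have hpt := hNt p hp hpN
      have h4 : p ∣ 3 * r := by
        have := dvd_sub hpt h1
        simpa using this
      exact coprime_false hrt hp ((hp.dvd_or_dvd h4).resolve_left (h3r p hp hpt)) hpt
  obtain ⟨x, y, hX, hY, hnn⟩ := cube_lemma (t - 3 * r) (3 * s - 3 * r) n hcop2
    ⟨s - r, by ring⟩ (by rw [← hn, hN]; ring)
  refine ⟨-3 * l, by simpa using hl0, ?_, 2 * x - y - l, 2 * y - x - l, -x - y - l, by ring, ?_⟩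
  · rw [abs_mul]
    exact size r s t l h0 hl0 26 le_rfl (by rw [hm, hl])
  · subst hnn
    rw [hl] at hm
    linear_combination -hm + 3 * hln - 2 * hX + hY

/-- Case where `3` divides `t`. -/
lemma stepB (r s t m : ℤ) (h : r ^ 3 + s ^ 3 + t ^ 3 = r * s * t) (h0 : r * s * t ≠ 0)
    (hrt : IsCoprime r t) (hst : IsCoprime s t) (hm : 3 * r + 3 * s + t = 26 * m)
    (h3 : (3 : ℤ) ∣ t) : ∃ d, d ≠ 0 ∧ |d| < |r * s * t| ∧ Good d := by
  have hr3 : ¬ (3 : ℤ) ∣ r := fun hh => coprime_false hrt Int.prime_three hh h3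
  have hs3 : ¬ (3 : ℤ) ∣ s := fun hh => coprime_false hst Int.prime_three hh h3
  have ht : t ≠ 0 := by rintro rfl; simp at h0
  obtain ⟨t', rfl⟩ := h3
  have hk : (3 : ℤ) ∣ r + s := by
    apply Int.prime_three.dvd_of_dvd_pow (n := 3)
    exact ⟨r * s * t' - 9 * t' ^ 3 + r * s * (r + s), by linear_combination h⟩
  obtain ⟨k, hk⟩ := hk
  obtain rfl : s = 3 * k - r := by linarith
  have hw : (3 : ℤ) ∣ r * (3 * k - r) * t' := by
    refine ⟨3 * k ^ 3 - k * r * (3 * k - r) + 3 * t' ^ 3, ?_⟩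
    have : 3 * (r * (3 * k - r) * t') =
      3 * (3 * (3 * k ^ 3 - k * r * (3 * k - r) + 3 * t' ^ 3)) := by
      linear_combination -h
    linarith
  have hw' : (3 : ℤ) ∣ t' := by
    rcases Int.prime_three.dvd_or_dvd hw with hh | hh
    · rcases Int.prime_three.dvd_or_dvd hh with hh | hh
      · exact (hr3 hh).elim
      · exact (hs3 hh).elim
    · exact hh
  obtain ⟨w, rfl⟩ := hw'
  have e1 : (k + w) * (r * (3 * k - r)) = 3 * (k ^ 3 + 27 * w ^ 3) := by
    have : 9 * ((k + w) * (r * (3 * k - r))) = 9 * (3 * (k ^ 3 + 27 * w ^ 3)) := by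
      linear_combination -h
    linarith
  have h3kw : (3 : ℤ) ∣ k + w := by
    rcases Int.prime_three.dvd_or_dvd (Dvd.intro _ e1.symm) with hh | hh
    · exact hh
    · rcases Int.prime_three.dvd_or_dvd hh with hh | hh
      · exact (hr3 hh).elim
      · exact (hs3 hh).elim
  obtain ⟨q, hq⟩ : ∃ q, k + w = 78 * q := ⟨(k + w) / 78, by omega⟩
  obtain ⟨N, hN⟩ : ∃ N, N = r ^ 2 - 3 * k * r + 3 * k ^ 2 - 3 * w * k + 3 * w ^ 2 := ⟨_, rfl⟩
  have hqN : q * N = (-w) ^ 3 := by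
    have : 78 * (q * N) = 78 * (-w) ^ 3 := by
      rw [← mul_assoc, ← hq, hN]; linear_combination -e1
    linarith
  have hw0 : w ≠ 0 := by rintro rfl; simp at ht
  have hN0 : N ≠ 0 := by
    rintro e
    rw [e, mul_zero] at hqN
    exact hw0 (by simpa using hqN.symm)
  have hNw : ∀ p : ℤ, Prime p → p ∣ N → p ∣ w := by
    intro p hp hpN
    have : p ∣ (-w) ^ 3 := by rw [← hqN]; exact hpN.mul_left _
    exact (dvd_neg).1 (hp.dvd_of_dvd_pow this)
  have hbad : ∀ p : ℤ, Prime p → p ∣ N → ¬ p ∣ k := by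
    intro p hp hpN hpk
    have hpw := hNw p hp hpN
    have : p ∣ r ^ 2 := by
      have e : r ^ 2 = N + k * (3 * r - 3 * k + 3 * w) - w * (3 * w) := by rw [hN]; ring
      rw [e]
      exact dvd_sub (dvd_add hpN (hpk.mul_right _)) (hpw.mul_right _)
    exact coprime_false hrt hp (hp.dvd_of_dvd_pow this) ((hpw.mul_left _).mul_left _)
  have hcop : IsCoprime q N := by
    refine isCoprime_of_prime_dvd (by simp [hN0]) ?_
    intro p hp hpq hpN
    apply hbad p hp hpN
    have e : k = 78 * q - w := by linarith
    rw [e]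
    exact dvd_sub (hpq.mul_left _) (hNw p hp hpN)
  obtain ⟨⟨l, hl⟩, ⟨n, hn⟩⟩ := Int.eq_pow_of_mul_eq_pow_odd hcop (by decide) hqN
  have hln : l * n = -w := cube_inj (by rw [mul_pow, ← hl, ← hn, hqN])
  have hl0 : l ≠ 0 := by rintro rfl; apply hw0; linarith
  have hNN : (2 * k - r - w) ^ 2 - (2 * k - r - w) * (k - 2 * w) + (k - 2 * w) ^ 2 = N := by
    rw [hN]; ring
  have hcop2 : IsCoprime (2 * k - r - w) (k - 2 * w) := by
    refine isCoprime_of_prime_dvd ?_ ?_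
    · rintro ⟨a1, a2⟩
      rw [a1, a2] at hNN
      apply hN0; rw [← hNN]; ring
    · intro p hp h1 h2
      have hpN : p ∣ N := by
        rw [← hNN, sq, sq]
        exact dvd_add (dvd_sub (h1.mul_right _) (h1.mul_right _)) (h2.mul_right _)
      apply hbad p hp hpN
      have e : k = (k - 2 * w) + 2 * w := by ring
      rw [e]
      exact dvd_add h2 ((hNw p hp hpN).mul_left _)
  obtain ⟨x, y, hX, hY, hnn⟩ := cube_lemma (2 * k - r - w) (k - 2 * w) n hcop2
    ⟨26 * q - w, by linarith⟩ (by rw [← hn, hNN])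
  refine ⟨3 * l, by simpa using hl0, ?_, x + l, -y + l, y - x + l, by ring, ?_⟩
  · rw [abs_mul]
    exact size _ _ _ l h0 hl0 702 (by norm_num) (by rw [← hl]; linarith)
  · subst hnn
    rw [hl] at hq
    have : 3 * ((x + l) * (-y + l) * (y - x + l)) = 3 * (3 * l) ^ 3 := by
      linear_combination hq - 3 * hln - hY
    linarith

lemma step (r s t : ℤ) (h : r ^ 3 + s ^ 3 + t ^ 3 = r * s * t) (h0 : r * s * t ≠ 0)
    (hrs : IsCoprime r s) (hrt : IsCoprime r t) (hst : IsCoprime s t)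
    (h13 : (13 : ℤ) ∣ 3 * r + 3 * s + t) : ∃ d, d ≠ 0 ∧ |d| < |r * s * t| ∧ Good d := by
  have h2 := parity r s t h hrs hrt hst
  obtain ⟨m, hm⟩ : ∃ m, 3 * r + 3 * s + t = 26 * m := ⟨(3 * r + 3 * s + t) / 26, by omega⟩
  by_cases h3 : (3 : ℤ) ∣ t
  · exact stepB r s t m h h0 hrt hst hm h3
  · exact stepA r s t m h h0 hrt hst hm h3

lemma step' (r s t : ℤ) (h : r ^ 3 + s ^ 3 + t ^ 3 = r * s * t) (h0 : r * s * t ≠ 0)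
    (hrs : IsCoprime r s) (hrt : IsCoprime r t) (hst : IsCoprime s t) :
    ∃ d, d ≠ 0 ∧ |d| < |r * s * t| ∧ Good d := by
  have p13 : Prime (13 : ℤ) := by
    have : Nat.Prime 13 := by norm_num
    exact_mod_cast Nat.prime_iff_prime_int.1 this
  have hd : (13 : ℤ) ∣ (3 * r + 3 * s + t) * (3 * s + 3 * t + r) * (3 * t + 3 * r + s) := by
    refine ⟨3 * (r^2*s + r^2*t + s^2*r + s^2*t + t^2*r + t^2*s) + 7 * (r*s*t), ?_⟩
    linear_combination 9 * h
  rcases p13.dvd_or_dvd hd with hd | hd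
  · rcases p13.dvd_or_dvd hd with hd | hd
    · exact step r s t h h0 hrs hrt hst hd
    · have e : r * s * t = s * t * r := by ring
      rw [e] at h0 h ⊢
      exact step s t r (by linarith) h0 hst hrs.symm hrt.symm hd
  · have e : r * s * t = t * r * s := by ring
    rw [e] at h0 h ⊢
    exact step t r s (by linarith) h0 hrt.symm hst.symm hrs hd

lemma descend (d : ℤ) (hd : d ≠ 0) (hg : Good d) : ∃ d', d' ≠ 0 ∧ |d'| < |d| ∧ Good d' := by
  obtain ⟨X, Y, Z, hsum, hprod⟩ := hg
  by_cases hc : ∃ p : ℤ, Prime p ∧ p ∣ X ∧ p ∣ Y ∧ p ∣ Z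
  · obtain ⟨p, hp, ⟨X, rfl⟩, ⟨Y, rfl⟩, ⟨Z, rfl⟩⟩ := hc
    have e : d = p * (X + Y + Z) := by rw [← hsum]; ring
    subst e
    have hp0 := hp.ne_zero
    have h1 : X + Y + Z ≠ 0 := right_ne_zero_of_mul hd
    refine ⟨X + Y + Z, h1, ?_, X, Y, Z, rfl, ?_⟩
    · rw [abs_mul]
      have h2 : 1 < |p| := by
        have := Int.one_le_abs hp0
        have h3 : |p| ≠ 1 := by
          intro h3
          exact hp.not_isUnit (Int.isUnit_iff_abs_eq.2 h3)
        omega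
      have := abs_pos.2 h1
      nlinarith
    · have : p ^ 3 * (X * Y * Z) = p ^ 3 * (X + Y + Z) ^ 3 := by linear_combination hprod
      exact mul_left_cancel₀ (pow_ne_zero 3 hp0) this
  · push Not at hc
    have hne : X * Y * Z ≠ 0 := by rw [hprod]; exact pow_ne_zero 3 hd
    have hX : X ≠ 0 := by rintro rfl; simp at hne
    have hY : Y ≠ 0 := by rintro rfl; simp at hne
    have hZ : Z ≠ 0 := by rintro rfl; simp at hne
    have hpd : ∀ p : ℤ, Prime p → p ∣ X * Y * Z → p ∣ d := by
      intro p hp h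
      rw [hprod] at h
      exact hp.dvd_of_dvd_pow h
    have cXY : IsCoprime X Y := by
      refine isCoprime_of_prime_dvd (by simp [hX]) ?_
      intro p hp h1 h2
      apply hc p hp h1 h2
      have := hpd p hp ((h1.mul_right _).mul_right _)
      have e : Z = d - X - Y := by linarith
      rw [e]; exact dvd_sub (dvd_sub this h1) h2
    have cXZ : IsCoprime X Z := by
      refine isCoprime_of_prime_dvd (by simp [hX]) ?_
      intro p hp h1 h2
      refine hc p hp h1 ?_ h2
      have := hpd p hp ((h1.mul_right _).mul_right _)
      have e : Y = d - X - Z := by linarith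
      rw [e]; exact dvd_sub (dvd_sub this h1) h2
    have cYZ : IsCoprime Y Z := by
      refine isCoprime_of_prime_dvd (by simp [hY]) ?_
      intro p hp h1 h2
      refine hc p hp ?_ h1 h2
      have := hpd p hp (h2.mul_left _)
      have e : X = d - Y - Z := by linarith
      rw [e]; exact dvd_sub (dvd_sub this h1) h2
    obtain ⟨r, rfl⟩ := Int.eq_pow_of_mul_eq_pow_odd_left (cXY.mul_right cXZ)
      (by decide : Odd 3) (by rw [← mul_assoc]; exact hprod)
    obtain ⟨s, rfl⟩ := Int.eq_pow_of_mul_eq_pow_odd_left (cXY.symm.mul_right cYZ)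
      (by decide : Odd 3) (c := d) (by rw [← hprod]; ring)
    obtain ⟨t, rfl⟩ := Int.eq_pow_of_mul_eq_pow_odd_left (cXZ.symm.mul_right cYZ.symm)
      (by decide : Odd 3) (c := d) (by rw [← hprod]; ring)
    have e : r * s * t = d := cube_inj (by rw [← hprod]; ring)
    rw [IsCoprime.pow_iff (by norm_num) (by norm_num)] at cXY cXZ cYZ
    subst e
    exact step' r s t hsum hd cXY cXZ cYZ

lemma no_good : ∀ (n : ℕ) (d : ℤ), d.natAbs = n → d ≠ 0 → ¬ Good d := by
  intro n
  induction n using Nat.strong_induction_on with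
  | _ n ih =>
    intro d hn hd hg
    obtain ⟨d', h1, h2, h3⟩ := descend d hd hg
    rw [Int.abs_eq_natAbs, Int.abs_eq_natAbs] at h2
    exact ih d'.natAbs (by omega) d' rfl h1 h3

theorem stmt19 : ¬ ∃ a b c : ℚ, a + b + c = 1 ∧ a * b * c = 1 := by
  rintro ⟨a, b, c, h1, h2⟩
  have ha := a.num_div_den
  have hb := b.num_div_den
  have hc := c.num_div_den
  have ha0 : (a.den : ℚ) ≠ 0 := by exact_mod_cast a.den_nz
  have hb0 : (b.den : ℚ) ≠ 0 := by exact_mod_cast b.den_nz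
  have hc0 : (c.den : ℚ) ≠ 0 := by exact_mod_cast c.den_nz
  have ha' : (a.num : ℚ) = a * a.den := by rw [eq_comm]; exact Rat.mul_den_eq_num a
  have hb' : (b.num : ℚ) = b * b.den := by rw [eq_comm]; exact Rat.mul_den_eq_num b
  have hc' : (c.num : ℚ) = c * c.den := by rw [eq_comm]; exact Rat.mul_den_eq_num c
  refine no_good _ ((a.den : ℤ) * b.den * c.den) rfl ?_
    ⟨a.num * b.den * c.den, b.num * a.den * c.den, c.num * a.den * b.den, ?_, ?_⟩
  · have := a.den_nz
    have := b.den_nz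
    have := c.den_nz
    positivity
  · have : (((a.num * b.den * c.den + b.num * a.den * c.den + c.num * a.den * b.den : ℤ)) : ℚ) =
        (((a.den : ℤ) * b.den * c.den : ℤ) : ℚ) := by
      push_cast
      rw [ha', hb', hc']
      linear_combination (a.den : ℚ) * b.den * c.den * h1
    exact_mod_cast this
  · have : (((a.num * b.den * c.den) * (b.num * a.den * c.den) * (c.num * a.den * b.den) : ℤ) : ℚ) =
        ((((a.den : ℤ) * b.den * c.den) ^ 3 : ℤ) : ℚ) := by
      push_cast
      rw [ha', hb', hc']
      linear_combination ((a.den : ℚ) * b.den * c.den) ^ 3 * h2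
    exact_mod_cast this
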